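/- arXiv:2501.11991 — 3 statements merged into one kernel-verified Lean document; each statement's English description precedes it below -/
import Mathlib

section
/- For every integer k ≥ 1 and every real number x with x ≠ 0 and x² ≠ 1: Σ_{i=1}^{k} U_i(x)²·U_{k-i}(x)² = x·((16k·x⁴ - 8(2k+1)·x² + 2k)·U_{2k}(x) + 8x² + 4k)/(16x(x² - 1)²) - (8k·x⁴ - 6(k+1)·x² + 1)·U_{2k-1}(x)/(16x(x² - 1)²). -/
/-- Evaluation of the Chebyshev polynomial of the first kind `T_n` at a real `x`
(indices extended to all integers via the Chebyshev recurrence). -/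
noncomputable def chebT (n : ℤ) (x : ℝ) : ℝ := (Polynomial.Chebyshev.T ℝ n).eval x

/-- Evaluation of the Chebyshev polynomial of the second kind `U_n` at a real `x`
(indices extended to all integers via the Chebyshev recurrence). -/
noncomputable def chebU (n : ℤ) (x : ℝ) : ℝ := (Polynomial.Chebyshev.U ℝ n).eval x

/-- `Z_n(x) = (U_n(x) - U_{n-1}(x) - 1)/(2(x - 1))`. -/
noncomputable def Zc (n : ℤ) (x : ℝ) : ℝ := (chebU n x - chebU (n - 1) x - 1) / (2 * (x - 1))

/-!
Multiplied by `2 (X ^ 2 - 1)`, the product `U i * U j` becomes `T (i + j + 2) - T (i - j)`. Along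
`i + j = k` the first term is constant, so squaring reduces the self-convolution of `U ^ 2` to the
sums of `T (i - j)` and of `T (i - j) ^ 2 = (1 + T (2 * (i - j))) / 2`. Both are cases of
`U (d - 1) * ∑ T (d * (i - j)) = U (d * (k + 1) - 1)`, with `d = 1` and `d = 2`. In the latter,
`U 1 = 2 * X` brings in the extra factor `X`.
-/

section

open Polynomial Polynomial.Chebyshev Finset

variable (R : Type*) [CommRing R]

theorem chebyshev_T_mul_U (m n : ℤ) : 2 * T R m * U R n = U R (n + m) + U R (n - m) := by
  induction m using Polynomial.Chebyshev.induct with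
  | zero => simp only [T_zero, add_zero, sub_zero]; ring
  | one => rw [T_one, U_add_one]; ring
  | add_two m ih₁ ih₀ =>
    have hT := T_add_two R m
    have h_add := U_add_two R (n + m)
    have h_sub := U_sub_two R (n - m)
    rw [show n + (m + 1 : ℤ) = n + m + 1 by ring, show n - (m + 1 : ℤ) = n - m - 1 by ring] at ih₁
    rw [← add_assoc, ← sub_sub]
    linear_combination 2 * U R n * hT - h_add - h_sub + 2 * X * ih₁ - ih₀
  | neg_add_one m ih₁ ih₀ =>
    have hT := T_sub_one R (-m)
    have h_add := U_sub_one R (n + -m)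
    have h_sub := U_add_one R (n - -m)
    rw [show n + (-m + 1 : ℤ) = n + -m + 1 by ring,
      show n - (-m + 1 : ℤ) = n - -m - 1 by ring] at ih₀
    rw [← add_sub_assoc, ← sub_add]
    linear_combination 2 * U R n * hT - h_add - h_sub + 2 * X * ih₁ - ih₀

theorem chebyshev_X_sq_sub_one_mul_U_mul_U (m n : ℤ) :
    2 * (X ^ 2 - 1) * (U R m * U R n) = T R (m + n + 2) - T R (m - n) := by
  have hU := one_sub_X_sq_mul_U_eq_pol_in_T R n
  have h₁ := chebyshev_T_mul_U R (n + 1) m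
  have h₂ := chebyshev_T_mul_U R (n + 2) m
  have h_add := T_eq_U_sub_X_mul_U R (m + n + 2)
  have h_sub := T_eq_X_mul_U_sub_U R (m - n - 2)
  ring_nf at hU h₁ h₂ h_add h_sub ⊢
  linear_combination -2 * U R m * hU - X * h₁ + h₂ - h_add + h_sub

theorem chebyshev_T_mul_U_sub_one (m d : ℤ) :
    2 * T R m * U R (d - 1) = U R (m + d - 1) - U R (m - d - 1) := by
  have h := chebyshev_T_mul_U R m (d - 1)
  have h_neg := U_neg_sub_one R (m - d)
  ring_nf at h h_neg ⊢
  rw [h, h_neg, ← sub_eq_add_neg]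

theorem chebyshev_U_mul_sum_antidiagonal_T (d : ℤ) (k : ℕ) :
    U R (d - 1) * ∑ p ∈ antidiagonal k, T R (d * (p.1 - p.2)) = U R (d * (k + 1) - 1) := by
  induction k using Nat.twoStepInduction with
  | zero => simp
  | one =>
    have h := chebyshev_T_mul_U_sub_one R d d
    simp only [sub_self, zero_sub, U_neg_one, sub_zero] at h
    simp only [Nat.sum_antidiagonal_succ, Nat.antidiagonal_zero, sum_singleton]
    push_cast
    rw [show d * -1 = -d by ring, T_neg, mul_one, show d * 2 = d + d by ring]
    linear_combination h
  | more k ih _ =>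
    have h := chebyshev_T_mul_U_sub_one R (d * (k + 2)) d
    have h_inner : ∀ p : ℕ × ℕ, ((p.1.succ : ℕ) - (p.2.succ : ℕ) : ℤ) = p.1 - p.2 := by
      intro p
      push_cast
      ring
    simp only [Nat.antidiagonal_succ_succ', sum_cons, sum_map, Function.Embedding.prodMap,
      Function.Embedding.coeFn_mk, Prod.map, h_inner, mul_add (U R (d - 1)), ih]
    push_cast
    rw [show d * (0 - (k + 2)) = -(d * (k + 2)) by ring, T_neg, sub_zero,
      show d * (k + 2 + 1) - 1 = d * (k + 2) + d - 1 by ring,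
      show d * (k + 1) - 1 = d * (k + 2) - d - 1 by ring]
    linear_combination h

theorem chebyshev_X_sq_sub_one_sq_mul_U_sq_mul_U_sq (m n : ℤ) :
    8 * (X ^ 2 - 1) ^ 2 * (U R m ^ 2 * U R n ^ 2) =
      T R (2 * (m + n + 2)) + 2 - 4 * T R (m + n + 2) * T R (m - n) + T R (2 * (m - n)) := by
  have h_prod := chebyshev_X_sq_sub_one_mul_U_mul_U R m n
  have h_add := T_mul_T R (m + n + 2) (m + n + 2)
  have h_sub := T_mul_T R (m - n) (m - n)
  rw [sub_self, T_zero, ← two_mul] at h_add h_sub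
  calc 8 * (X ^ 2 - 1) ^ 2 * (U R m ^ 2 * U R n ^ 2)
      = 2 * (2 * (X ^ 2 - 1) * (U R m * U R n)) ^ 2 := by ring
    _ = 2 * (T R (m + n + 2) - T R (m - n)) ^ 2 := by rw [h_prod]
    _ = _ := by linear_combination h_add + h_sub

theorem chebyshev_sum_antidiagonal_U_sq_mul_U_sq (k : ℕ) :
    16 * X * (X ^ 2 - 1) ^ 2 * ∑ p ∈ antidiagonal k, U R p.1 ^ 2 * U R p.2 ^ 2 =
      2 * (k + 1 : R[X]) * X * (T R (2 * k + 4) + 2) - 4 * X * (U R (2 * k + 2) - 1) +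
        U R (2 * k + 1) := by
  have h_sum : 8 * (X ^ 2 - 1) ^ 2 * ∑ p ∈ antidiagonal k, U R p.1 ^ 2 * U R p.2 ^ 2 =
      (k + 1 : R[X]) * (T R (2 * k + 4) + 2) -
        4 * T R (k + 2) * ∑ p ∈ antidiagonal k, T R (p.1 - p.2) +
        ∑ p ∈ antidiagonal k, T R (2 * (p.1 - p.2)) := by
    have h_term : ∀ p ∈ antidiagonal k, 8 * (X ^ 2 - 1) ^ 2 * (U R p.1 ^ 2 * U R p.2 ^ 2) =
        T R (2 * k + 4) + 2 - 4 * T R (k + 2) * T R (p.1 - p.2) + T R (2 * (p.1 - p.2)) := by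
      rintro ⟨i, j⟩ hij
      have hk : (i + j : ℤ) = k := mod_cast mem_antidiagonal.mp hij
      rw [chebyshev_X_sq_sub_one_sq_mul_U_sq_mul_U_sq, hk, mul_add, show (2 * 2 : ℤ) = 4 from rfl]
    rw [mul_sum, sum_congr rfl h_term, sum_add_distrib, sum_sub_distrib, ← mul_sum, sum_const,
      Nat.card_antidiagonal, nsmul_eq_mul, Nat.cast_add_one]
  have h_sum_T : ∑ p ∈ antidiagonal k, T R (p.1 - p.2) = U R k := by
    simpa using chebyshev_U_mul_sum_antidiagonal_T R 1 k
  have h_sum_T_two : 2 * X * ∑ p ∈ antidiagonal k, T R (2 * (p.1 - p.2)) = U R (2 * k + 1) := by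
    have h := chebyshev_U_mul_sum_antidiagonal_T R 2 k
    rwa [show (2 - 1 : ℤ) = 1 from rfl, U_one, show (2 * (k + 1) - 1 : ℤ) = 2 * k + 1 by ring] at h
  have h_mul : 2 * T R (k + 2) * U R k = U R (2 * k + 2) - 1 := by
    rw [chebyshev_T_mul_U, show (k + (k + 2) : ℤ) = 2 * k + 2 by ring,
      show (k - (k + 2) : ℤ) = -2 by ring, U_neg_two, sub_eq_add_neg]
  rw [h_sum_T] at h_sum
  linear_combination 2 * X * h_sum - 4 * X * h_mul + h_sum_T_two

theorem add_sum_Icc_one_eq_sum_antidiagonal {M : Type*} [AddCommMonoid M] (f : ℤ → ℤ → M)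
    (k : ℕ) :
    f 0 k + ∑ i ∈ Icc (1 : ℤ) k, f i (k - i) = ∑ p ∈ antidiagonal k, f p.1 p.2 := by
  have h_antidiagonal : ∑ p ∈ antidiagonal k, f p.1 p.2 = ∑ i ∈ range (k + 1), f i (k - i) := by
    rw [Nat.sum_antidiagonal_eq_sum_range_succ_mk]
    refine sum_congr rfl fun i hi => ?_
    rw [Nat.cast_sub (mem_range_succ_iff.mp hi)]
  rw [h_antidiagonal, sum_range_succ', Int.Icc_eq_finset_map, sum_map]
  simp [add_comm]

theorem sum_q16_general (k : ℕ) :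
    16 * X * (X ^ 2 - 1) ^ 2 * ∑ i ∈ Icc (1 : ℤ) k, U R i ^ 2 * U R (k - i) ^ 2 =
      X * ((16 * (k : R[X]) * X ^ 4 - 8 * (2 * (k : R[X]) + 1) * X ^ 2 + 2 * (k : R[X])) *
            U R (2 * k) + 8 * X ^ 2 + 4 * (k : R[X])) -
        (8 * (k : R[X]) * X ^ 4 - 6 * ((k : R[X]) + 1) * X ^ 2 + 1) * U R (2 * k - 1) := by
  have h_split := add_sum_Icc_one_eq_sum_antidiagonal (fun i j => U R i ^ 2 * U R j ^ 2) k
  have h_sum := chebyshev_sum_antidiagonal_U_sq_mul_U_sq R k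
  have h_first := chebyshev_X_sq_sub_one_mul_U_mul_U R k k
  have h_U₁ := U_add_one R (2 * k)
  have h_U₂ := U_add_two R (2 * k)
  have h_U₃ : U R (2 * k + 3) = 2 * X * U R (2 * k + 2) - U R (2 * k + 1) := by
    simpa [add_assoc] using U_add_two R (2 * k + 1)
  have h_T₂ := T_eq_X_mul_U_sub_U R (2 * k)
  have h_T₄ : T R (2 * k + 4) = X * U R (2 * k + 3) - U R (2 * k + 2) := by
    simpa [add_assoc] using T_eq_X_mul_U_sub_U R (2 * k + 2)
  simp only [U_zero, one_pow, one_mul] at h_split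
  rw [sub_self, T_zero, ← two_mul] at h_first
  rw [h_T₄, h_U₃, h_U₂, h_U₁] at h_sum
  rw [h_T₂, h_U₁] at h_first
  linear_combination 16 * X * (X ^ 2 - 1) ^ 2 * h_split + h_sum - 8 * X * (X ^ 2 - 1) * h_first

end

/-- `Σ_{i=1}^{k} U_i(x)²·U_{k-i}(x)²` in closed form (identity `q₁₆`). -/
theorem sum_q16 (k : ℕ) (hk : 1 ≤ k) (x : ℝ) (hx0 : x ≠ 0) (hx : x ^ 2 ≠ 1) :
    ∑ i ∈ Finset.Icc (1 : ℤ) (k : ℤ), chebU i x ^ 2 * chebU ((k : ℤ) - i) x ^ 2 =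
      x * ((16 * k * x ^ 4 - 8 * (2 * k + 1) * x ^ 2 + 2 * k) * chebU (2 * (k : ℤ)) x +
            8 * x ^ 2 + 4 * k) / (16 * x * (x ^ 2 - 1) ^ 2) -
        (8 * k * x ^ 4 - 6 * (k + 1) * x ^ 2 + 1) * chebU (2 * (k : ℤ) - 1) x /
          (16 * x * (x ^ 2 - 1) ^ 2) := by
  have hD : 16 * x * (x ^ 2 - 1) ^ 2 ≠ 0 := by simp [hx0, sub_ne_zero.mpr hx]
  rw [← sub_div, eq_div_iff hD, mul_comm]
  simpa [chebU, Polynomial.eval_finsetSum] using congrArg (Polynomial.eval x) (sum_q16_general ℝ k)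
end

section
/- For every integer k ≥ 1 and every real number x with x² ≠ 1, T_2(x) ≠ 1, and T_4(x) ≠ 1: Σ_{i=1}^{k} U_i(x)·U_{i-1}(x)·U_{k-i}(x)·U_{k-i-1}(x) = ((4(k-1)x² - 2k + 3)·U_{2k}(x) - (2k-1)·x·U_{2k-1}(x) + 4(k+1)x²)/(16(x² - 1)²) - (Z_{k+1}(T_2(x)) - Z_{k-1}(T_2(x)))/(4(x² - 1)²) + T_{2k}(x)·(Z_{k+1}(T_4(x)) - Z_{k-1}(T_4(x)))/(16(x² - 1)²) + (1 - T_2(x)²)·T_2(x)·U_{k-1}(T_2(x))·Z_k(T_4(x))/(4(x² - 1)²). -/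
/-!
Each factor `U_i U_{i-1}` is linear in `T_{2i+1}`, so every summand linearizes into values `T_n`
whose index `n` is affine in `i`, and these sum in closed form because `2 T_n = U_n - U_{n-2}`
telescopes. On the other side the `Z`-terms collapse, because `Z` is evaluated at a double angle:
`Z_{k+1}(T_2(y)) - Z_{k-1}(T_2(y)) = U_{2k}(y)` and `2 y Z_k(T_2(y)) = U_k(y) U_{k-1}(y)`. With
`y = T_2(x)`, the two closed forms agree by `2 U_{k-1}(y)` times the identity
`T_{k+1}(y) T_k(y) + (1 - y²) U_k(y) U_{k-1}(y) = y`, the subtraction formula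
`cos ((k + 1)θ - kθ) = cos θ`.
-/

namespace ChebyshevSums

open Finset Polynomial Polynomial.Chebyshev

section CommRing

variable (R : Type*) [CommRing R]

theorem U_sq_add_U_sub_one_sq (n : ℤ) :
    U R n ^ 2 + U R (n - 1) ^ 2 - 2 * X * U R n * U R (n - 1) = 1 := by
  have h := congr_arg (comp · (2 * X)) (S_sq_add_S_sq R (n - 1))
  simp only [sub_comp, add_comp, mul_comp, pow_comp, X_comp, one_comp, S_comp_two_mul_X,
    sub_add_cancel] at h
  linear_combination h

theorem T_add_one_eq_X_mul_U_sub_U (n : ℤ) : T R (n + 1) = X * U R n - U R (n - 1) := by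
  linear_combination (norm := ring_nf) T_eq_X_mul_U_sub_U R (n - 1)

theorem T_add_one_mul_T_add_one_sub_X_sq_mul_U_mul_U (n : ℤ) :
    T R (n + 1) * T R n + (1 - X ^ 2) * (U R n * U R (n - 1)) = X := by
  rw [T_add_one_eq_X_mul_U_sub_U, T_eq_U_sub_X_mul_U]
  linear_combination X * U_sq_add_U_sub_one_sq R n

theorem two_mul_one_sub_X_sq_mul_U_mul_U_sub_one (n : ℤ) :
    2 * (1 - X ^ 2) * (U R n * U R (n - 1)) = X - T R (2 * n + 1) := by
  have hT := T_mul_T R (n + 1) n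
  rw [show n + 1 + n = 2 * n + 1 by ring, show n + 1 - n = 1 by ring, T_one] at hT
  linear_combination 2 * T_add_one_mul_T_add_one_sub_X_sq_mul_U_mul_U R n - hT

theorem two_mul_T_eq_U_sub_U_sub_two (n : ℤ) : 2 * T R n = U R n - U R (n - 2) := by
  simpa using two_mul_T_eq_U_sub_U R (n - 2)

theorem T_add_two_sub_T (n : ℤ) : T R (n + 2) - T R n = 2 * (X ^ 2 - 1) * U R n := by
  linear_combination T_eq_X_mul_U_sub_U R n - T_eq_U_sub_X_mul_U R n + X * U_add_one R n

theorem T_mul_U (m n : ℤ) : 2 * T R m * U R n = U R (n + m) + U R (n - m) := by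
  induction m using Polynomial.Chebyshev.induct' with
  | zero => simp [two_mul]
  | one => rw [T_one, U_add_one]; ring
  | add_two m ih₁ ih₀ =>
    have hT := T_add_two R m
    have hadd := U_add_two R (n + m)
    have hsub := U_sub_two R (n - m)
    linear_combination (norm := ring_nf) 2 * U R n * hT - hadd - hsub + 2 * (X : R[X]) * ih₁ - ih₀
  | neg m ih => rw [T_neg, ih, sub_neg_eq_add, ← sub_eq_add_neg, add_comm]

theorem U_two_mul (n : ℤ) : U R (2 * n) = 2 * T R (n + 1) * U R (n - 1) + 1 := by
  rw [T_mul_U, show n - 1 + (n + 1) = 2 * n by ring, show n - 1 - (n + 1) = -2 by ring, U_neg_two]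
  ring

theorem U_mul_sub_one (m n : ℤ) :
    U R (m * n - 1) = U R (n - 1) * (U R (m - 1)).comp (T R n) := by
  induction m using Polynomial.Chebyshev.induct' with
  | zero => simp
  | one => simp
  | add_two m ih₁ ih₀ =>
    have hU := T_mul_U R n ((m + 1) * n - 1)
    have hcomp := congr_arg (comp · (T R n)) (U_add_two R (m - 1))
    simp only [sub_comp, mul_comp, ofNat_comp, X_comp] at hcomp
    linear_combination (norm := ring_nf)
      -hU - U R (n - 1) * hcomp + 2 * T R n * ih₁ - ih₀
  | neg m ih => rw [neg_mul, U_neg_sub_one, U_neg_sub_one, ih, neg_comp, mul_neg]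

theorem two_mul_X_mul_U_comp_T_two (n : ℤ) : 2 * X * (U R n).comp (T R 2) = U R (2 * n + 1) := by
  have h := U_mul_sub_one R (n + 1) 2
  rw [show (n + 1) * 2 - 1 = 2 * n + 1 by ring, add_sub_cancel_right, show (2 : ℤ) - 1 = 1 by rfl,
    U_one] at h
  exact h.symm

theorem two_mul_sum_T (m : ℤ) (k : ℕ) :
    2 * ∑ i ∈ Icc (1 : ℤ) k, T R (2 * i + m) = U R (2 * k + m) - U R m := by
  induction k with
  | zero => simp
  | succ k ih =>
    rw [Nat.cast_succ, ← insert_Icc_right_eq_Icc_add_one (by lia), sum_insert (by simp), mul_add,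
      ih, two_mul_T_eq_U_sub_U_sub_two]
    ring_nf

theorem two_mul_sum_T_two_mul_sub (k : ℕ) :
    2 * ∑ i ∈ Icc (1 : ℤ) k, T R (2 * i - k) = 2 * X * U R (k - 1) := by
  have h := two_mul_sum_T R (-k) k
  rw [U_neg, show 2 * (k : ℤ) + -k = k by ring] at h
  simp only [← sub_eq_add_neg] at h
  linear_combination h + U_sub_two R k

theorem one_sub_X_sq_sq_mul_U_mul_U_mul_U_mul_U (i k : ℤ) :
    8 * (1 - X ^ 2) ^ 2 * (U R i * U R (i - 1) * U R (k - i) * U R (k - i - 1)) =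
      2 * X ^ 2 - 2 * X * T R (2 * i + 1) - 2 * X * T R (2 * i + (-(2 * k) - 1)) + T R (2 * k + 2) +
        (T R (2 * i - k)).comp (T R 2) := by
  have hleft := two_mul_one_sub_X_sq_mul_U_mul_U_sub_one R i
  have hright := two_mul_one_sub_X_sq_mul_U_mul_U_sub_one R (k - i)
  have hreflect := T_neg R (2 * (k - i) + 1)
  have hprod := T_mul_T R (2 * i + 1) (2 * (k - i) + 1)
  rw [show -(2 * (k - i) + 1) = 2 * i + (-(2 * k) - 1) by ring] at hreflect
  rw [show 2 * i + 1 + (2 * (k - i) + 1) = 2 * k + 2 by ring,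
    show 2 * i + 1 - (2 * (k - i) + 1) = (2 * i - k) * 2 by ring, T_mul] at hprod
  calc
    _ = 2 * (2 * (1 - X ^ 2) * (U R i * U R (i - 1))) *
          (2 * (1 - X ^ 2) * (U R (k - i) * U R (k - i - 1))) := by ring
    _ = 2 * (X - T R (2 * i + 1)) * (X - T R (2 * (k - i) + 1)) := by rw [hleft, hright]
    _ = _ := by linear_combination hprod + 2 * X * hreflect

/-- The self-convolution `Σ_{i=1}^{k} U_i U_{i-1} U_{k-i} U_{k-i-1}` of `i ↦ U_i U_{i-1}`, as a
polynomial. The summation index is an integer, so that `k - i - 1` reaches `-1`. -/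
noncomputable def convolutionSum (k : ℕ) : R[X] :=
  ∑ i ∈ Icc (1 : ℤ) k, U R i * U R (i - 1) * U R (k - i) * U R (k - i - 1)

theorem one_sub_X_sq_sq_mul_convolutionSum (k : ℕ) :
    16 * (1 - X ^ 2) ^ 2 * convolutionSum R k =
      4 * (k + 1 : R[X]) * X ^ 2 + 2 * (k : R[X]) * T R (2 * k + 2) - 4 * X ^ 2 * U R (2 * k) +
        2 * T R 2 * (U R (k - 1)).comp (T R 2) := by
  have hlin := sum_congr rfl fun i (_ : i ∈ Icc (1 : ℤ) k) ↦
    one_sub_X_sq_sq_mul_U_mul_U_mul_U_mul_U R i k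
  simp only [sum_add_distrib, sum_sub_distrib, ← mul_sum, ← Polynomial.sum_comp, sum_const,
    Int.card_Icc, add_sub_cancel_right, Int.toNat_natCast, nsmul_eq_mul] at hlin
  have hodd := two_mul_sum_T R 1 k
  rw [U_one] at hodd
  have hodd_reflected := two_mul_sum_T R (-(2 * k) - 1) k
  rw [show 2 * (k : ℤ) + (-(2 * k) - 1) = -1 by ring, U_neg_one, U_neg_sub_one] at hodd_reflected
  have heven := congr_arg (comp · (T R 2)) (two_mul_sum_T_two_mul_sub R k)
  simp only [mul_comp, ofNat_comp, X_comp, Nat.cast_ofNat] at heven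
  rw [convolutionSum]
  linear_combination 2 * hlin - 2 * X * hodd - 2 * X * hodd_reflected + heven -
    2 * X * U_add_one R (2 * k)

theorem T_mul_U_two_mul_sub_one_add_mul_U_sq_mul_U (n : ℤ) :
    T R n * (U R (2 * n) - 1) + 2 * (1 - X ^ 2) * U R (n - 1) ^ 2 * U R n =
      2 * X * U R (n - 1) := by
  linear_combination T R n * U_two_mul R n +
    2 * U R (n - 1) * T_add_one_mul_T_add_one_sub_X_sq_mul_U_mul_U R n

theorem one_sub_X_sq_sq_mul_convolutionSum_eq_U (k : ℕ) :
    16 * (1 - X ^ 2) ^ 2 * convolutionSum R k =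
      (4 * (k - 1 : R[X]) * X ^ 2 - 2 * (k : R[X]) + 3) * U R (2 * k) -
          (2 * (k : R[X]) - 1) * X * U R (2 * k - 1) + 4 * (k + 1 : R[X]) * X ^ 2 -
        4 * U R (2 * k) + T R (2 * k) * (U R (2 * k)).comp (T R 2) +
        2 * (1 - T R 2 ^ 2) * (U R (k - 1)).comp (T R 2) ^ 2 * (U R k).comp (T R 2) := by
  have hdouble := congr_arg (comp · (T R 2)) (T_mul_U_two_mul_sub_one_add_mul_U_sq_mul_U R k)
  simp only [add_comp, sub_comp, mul_comp, pow_comp, X_comp, one_comp, ofNat_comp, ← T_mul,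
    Nat.cast_ofNat, mul_comm (k : ℤ) 2] at hdouble
  linear_combination one_sub_X_sq_sq_mul_convolutionSum R k - hdouble +
    2 * (k : R[X]) * T_add_two_sub_T R (2 * k) +
    (2 * (k : R[X]) - 1) * T_eq_U_sub_X_mul_U R (2 * k)

theorem U_sub_U_comp_T_two (n : ℤ) :
    (U R (n + 1) - U R n - (U R (n - 1) - U R (n - 2))).comp (T R 2) =
      4 * (X ^ 2 - 1) * U R (2 * n) := by
  have hdiff : U R (n + 1) - U R n - (U R (n - 1) - U R (n - 2)) = 2 * (T R (n + 1) - T R n) := by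
    rw [mul_sub, two_mul_T_eq_U_sub_U_sub_two, two_mul_T_eq_U_sub_U_sub_two,
      show n + 1 - 2 = n - 1 by ring]
    ring
  rw [hdiff, mul_comp, sub_comp, ofNat_comp, ← T_mul, ← T_mul,
    show (n + 1) * 2 = 2 * n + 2 by ring, mul_comm n 2, T_add_two_sub_T]
  push_cast
  ring

theorem two_mul_X_mul_U_sub_U_sub_one_comp_T_two (n : ℤ) :
    2 * X * (U R n - U R (n - 1) - 1).comp (T R 2) =
      4 * (X ^ 2 - 1) * (U R n * U R (n - 1)) := by
  have hT := two_mul_T_eq_U_sub_U_sub_two R (2 * n + 1)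
  have hU := two_mul_X_mul_U_comp_T_two R (n - 1)
  rw [show 2 * (n - 1) + 1 = 2 * n + 1 - 2 by ring] at hU
  rw [sub_comp, sub_comp, one_comp]
  linear_combination two_mul_X_mul_U_comp_T_two R n - hU - hT +
    2 * two_mul_one_sub_X_sq_mul_U_mul_U_sub_one R n

variable {R}

theorem eval_T_two (x : R) : (T R 2).eval x = 2 * x ^ 2 - 1 := by
  simp [T_two]

theorem eval_T_four (x : R) : (T R 4).eval x = (T R 2).eval ((T R 2).eval x) := by
  rw [← eval_comp, ← T_mul]; rfl

theorem four_mul_sq_sub_one_ne_zero [NoZeroDivisors R] {x : R}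
    (hx : (T R 2).eval x ≠ 1) : 4 * (x ^ 2 - 1) ≠ 0 := by
  have hx' : 2 * (x ^ 2 - 1) ≠ 0 := by
    rw [← sub_ne_zero, eval_T_two] at hx
    convert hx using 1
    ring
  rw [show 4 * (x ^ 2 - 1) = 2 * (2 * (x ^ 2 - 1)) by ring]
  exact mul_ne_zero (left_ne_zero_of_mul hx') hx'

end CommRing

section Field

variable {K : Type*} [Field K] {x : K}

/-- The quotient `Z_n(x) = (U_n(x) - U_{n-1}(x) - 1) / (2 (x - 1))` over an arbitrary field; as for
`Zc`, it has the junk value `0` when `2 (x - 1) = 0`. -/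
noncomputable def chebyshevZ (n : ℤ) (x : K) : K :=
  ((U K n).eval x - (U K (n - 1)).eval x - 1) / (2 * (x - 1))

theorem chebyshevZ_eval_T_two (n : ℤ) :
    chebyshevZ n ((T K 2).eval x) =
      ((U K n - U K (n - 1) - 1).comp (T K 2)).eval x / (4 * (x ^ 2 - 1)) := by
  rw [chebyshevZ, eval_comp, eval_sub, eval_sub, eval_one,
    show 2 * ((T K 2).eval x - 1) = 4 * (x ^ 2 - 1) by rw [eval_T_two]; ring]

theorem chebyshevZ_add_one_sub_chebyshevZ_sub_one_eval_T_two (hx : (T K 2).eval x ≠ 1) (n : ℤ) :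
    chebyshevZ (n + 1) ((T K 2).eval x) - chebyshevZ (n - 1) ((T K 2).eval x) =
      (U K (2 * n)).eval x := by
  have h := congr_arg (eval x) (U_sub_U_comp_T_two K n)
  simp only [sub_comp, eval_sub, eval_mul, eval_pow, eval_X, eval_one, eval_ofNat] at h
  rw [chebyshevZ_eval_T_two, chebyshevZ_eval_T_two, ← sub_div,
    div_eq_iff (four_mul_sq_sub_one_ne_zero hx), show n - 1 - 1 = n - 2 by ring,
    add_sub_cancel_right]
  simp only [sub_comp, eval_sub]
  linear_combination h

theorem two_mul_mul_chebyshevZ_eval_T_two (hx : (T K 2).eval x ≠ 1) (n : ℤ) :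
    2 * x * chebyshevZ n ((T K 2).eval x) = (U K n).eval x * (U K (n - 1)).eval x := by
  have h := congr_arg (eval x) (two_mul_X_mul_U_sub_U_sub_one_comp_T_two K n)
  simp only [eval_sub, eval_mul, eval_pow, eval_X, eval_one, eval_ofNat] at h
  rw [chebyshevZ_eval_T_two, ← mul_div_assoc, div_eq_iff (four_mul_sq_sub_one_ne_zero hx), h]
  ring

end Field

end ChebyshevSums

open Finset Polynomial Polynomial.Chebyshev ChebyshevSums in
theorem sum_q18_general {K : Type*} [Field K] (k : ℕ) (x : K) (hT4 : (T K 4).eval x ≠ 1) :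
    ∑ i ∈ Icc (1 : ℤ) k, (U K i).eval x * (U K (i - 1)).eval x *
        (U K (k - i)).eval x * (U K (k - i - 1)).eval x =
      ((4 * (k - 1) * x ^ 2 - 2 * k + 3) * (U K (2 * k)).eval x -
          (2 * k - 1) * x * (U K (2 * k - 1)).eval x + 4 * (k + 1) * x ^ 2) /
        (16 * (x ^ 2 - 1) ^ 2) -
      (chebyshevZ (k + 1) ((T K 2).eval x) - chebyshevZ (k - 1) ((T K 2).eval x)) /
        (4 * (x ^ 2 - 1) ^ 2) +
      (T K (2 * k)).eval x *
          (chebyshevZ (k + 1) ((T K 4).eval x) - chebyshevZ (k - 1) ((T K 4).eval x)) /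
        (16 * (x ^ 2 - 1) ^ 2) +
      (1 - (T K 2).eval x ^ 2) * (T K 2).eval x * (U K (k - 1)).eval ((T K 2).eval x) *
          chebyshevZ k ((T K 4).eval x) / (4 * (x ^ 2 - 1) ^ 2) := by
  have hTT : (T K 2).eval ((T K 2).eval x) ≠ 1 := eval_T_four x ▸ hT4
  have hT2 : (T K 2).eval x ≠ 1 := fun h ↦ hTT (by rw [h, T_eval_one])
  have hx := four_mul_sq_sub_one_ne_zero hT2
  have hden : 16 * (x ^ 2 - 1) ^ 2 ≠ 0 := by convert pow_ne_zero 2 hx using 1; ring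
  have hdiv (a : K) : a / (4 * (x ^ 2 - 1) ^ 2) = 4 * a / (16 * (x ^ 2 - 1) ^ 2) := by
    rw [← mul_div_mul_left a _ (left_ne_zero_of_mul hx)]
    ring
  have hsum := congr_arg (eval x) (one_sub_X_sq_sq_mul_convolutionSum_eq_U K k)
  simp only [convolutionSum, eval_add, eval_sub, eval_mul, eval_pow, eval_X, eval_one, eval_ofNat,
    eval_natCast, eval_comp, eval_finsetSum] at hsum
  have hZ := two_mul_mul_chebyshevZ_eval_T_two hTT k
  rw [eval_T_four, chebyshevZ_add_one_sub_chebyshevZ_sub_one_eval_T_two hT2,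
    chebyshevZ_add_one_sub_chebyshevZ_sub_one_eval_T_two hTT, hdiv, hdiv, ← sub_div, ← add_div,
    ← add_div, eq_div_iff hden]
  linear_combination hsum - 2 * (1 - (T K 2).eval x ^ 2) *
    (U K (k - 1)).eval ((T K 2).eval x) * hZ

/-- `Σ_{i=1}^{k} U_i(x)·U_{i-1}(x)·U_{k-i}(x)·U_{k-i-1}(x)` in closed form (identity `q₁₈`). -/
theorem sum_q18 (k : ℕ) (hk : 1 ≤ k) (x : ℝ) (hx : x ^ 2 ≠ 1)
    (hT2 : chebT 2 x ≠ 1) (hT4 : chebT 4 x ≠ 1) :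
    ∑ i ∈ Finset.Icc (1 : ℤ) (k : ℤ),
        chebU i x * chebU (i - 1) x * chebU ((k : ℤ) - i) x * chebU ((k : ℤ) - i - 1) x =
      ((4 * (k - 1) * x ^ 2 - 2 * k + 3) * chebU (2 * (k : ℤ)) x -
          (2 * k - 1) * x * chebU (2 * (k : ℤ) - 1) x + 4 * (k + 1) * x ^ 2) /
        (16 * (x ^ 2 - 1) ^ 2) -
      (Zc ((k : ℤ) + 1) (chebT 2 x) - Zc ((k : ℤ) - 1) (chebT 2 x)) / (4 * (x ^ 2 - 1) ^ 2) +
      chebT (2 * (k : ℤ)) x * (Zc ((k : ℤ) + 1) (chebT 4 x) - Zc ((k : ℤ) - 1) (chebT 4 x)) /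
        (16 * (x ^ 2 - 1) ^ 2) +
      (1 - chebT 2 x ^ 2) * chebT 2 x * chebU ((k : ℤ) - 1) (chebT 2 x) *
          Zc (k : ℤ) (chebT 4 x) / (4 * (x ^ 2 - 1) ^ 2) :=
  sum_q18_general k x hT4
end

section
/- For every integer k ≥ 1 and every real number x with x ≠ 0 and x² ≠ 1: Σ_{i=1}^{k} U_i(x)²·U_{k-i-2}(x)·U_{k-i}(x) = (16x⁴ - 2(k+8)x² + 1)·U_{2k-1}(x)/(16x(x² - 1)²) + x·(2(-8x⁴ + 2(k+3)x² - k)·U_{2k}(x) + 2(2k+1)·T_2(x) + 2·T_4(x))/(16x(x² - 1)²). -/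
/-!
The product formula `2(1 - X²) U_m U_n = T_{m-n} - T_{m+n+2}`, applied to `U_i · U_i` and to
`U_{k-i} · U_{k-i-2}`, turns the summand times `8(X² - 1)²` into a linear combination of
`T_{2i+2}`, `T_{2i-2k}`, `T_{4i+2-2k}` and terms independent of `i`. Each of the three sums
telescopes, because `2 T_n = U_n - U_{n-2}` and `4X T_n = U_{n+1} - U_{n-3}`; the latter step is
where the factor `x` in the denominator comes from. The recurrences then express everything in
terms of `U_{2k-1}` and `U_{2k}`.
-/

section Sum

open Finset

theorem sum_Icc_int_sub {M : Type*} [AddCommGroup M] (f : ℤ → M) {a b : ℤ} (hab : a ≤ b + 1) :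
    ∑ i ∈ Icc a b, (f i - f (i - 1)) = f b - f (a - 1) := by
  obtain ⟨c, rfl⟩ : ∃ c, b = c - 1 := ⟨b + 1, by ring⟩
  rw [sub_add_cancel] at hab
  induction c, hab using Int.leInduction with
  | base => simp
  | succ c hac ih =>
    rw [add_sub_cancel_right, ← insert_Icc_sub_one_right_eq_Icc hac, sum_insert (by simp), ih]
    abel

end Sum

section Chebyshev

open Finset Polynomial Polynomial.Chebyshev

variable (R : Type*) [CommRing R]

theorem T_four : T R 4 = 8 * X ^ 4 - 8 * X ^ 2 + 1 := by
  have hT : 2 * T R 2 * T R 2 = T R 4 + 1 := by simpa using T_mul_T R 2 2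
  rw [T_two] at hT
  linear_combination -hT

theorem two_mul_one_sub_X_sq_mul_U_mul_U (m n : ℤ) :
    2 * (1 - X ^ 2) * U R m * U R n = T R (m - n) - T R (m + n + 2) := by
  have hm := one_sub_X_sq_mul_U_eq_pol_in_T R m
  induction n using Polynomial.Chebyshev.induct with
  | zero =>
    rw [U_zero, add_zero, sub_zero]
    linear_combination 2 * hm - T_add_two R m
  | one =>
    rw [U_one]
    linear_combination (norm := ring_nf) 4 * X * hm + T_add_two R (m + 1) - T_sub_one R m
      - 2 * X * T_add_two R m
  | add_two n ih1 ih0 =>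
    linear_combination (norm := ring_nf) 2 * (1 - X ^ 2) * U R m * U_add_two R n + 2 * X * ih1
      - ih0 - T_sub_two R (m - n) + T_add_two R (m + n + 2)
  | neg_add_one n ih1 ih0 =>
    linear_combination (norm := ring_nf) 2 * (1 - X ^ 2) * U R m * U_sub_one R (-n) + 2 * X * ih1
      - ih0 - T_add_one R (m + n) + T_sub_one R (m - n + 2)

theorem four_mul_X_mul_T_eq_U_sub_U (n : ℤ) : 4 * X * T R n = U R (n + 1) - U R (n - 3) := by
  linear_combination (norm := ring_nf) two_mul_T_eq_U_sub_U R (n - 1)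
    + two_mul_T_eq_U_sub_U R (n - 3) - 2 * T_add_one R n

theorem U_add_add_U_sub (m n : ℤ) : U R (n + m) + U R (n - m) = 2 * T R m * U R n := by
  induction m using Polynomial.Chebyshev.induct with
  | zero =>
    rw [T_zero, add_zero, sub_zero]
    ring
  | one =>
    rw [T_one]
    linear_combination U_add_one R n
  | add_two m ih1 ih0 =>
    linear_combination (norm := ring_nf) U_add_two R (n + m) + U_sub_two R (n - m) + 2 * X * ih1
      - ih0 - 2 * U R n * T_add_two R m
  | neg_add_one m ih1 ih0 =>
    linear_combination (norm := ring_nf) U_sub_one R (n - m) + U_add_one R (n + m) + 2 * X * ih1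
      - ih0 - 2 * U R n * T_sub_one R (-m)

theorem two_mul_sum_Icc_T (n : ℕ) (c : ℤ) :
    2 * ∑ i ∈ Icc (1 : ℤ) n, T R (2 * i + c) = U R (2 * n + c) - U R c := by
  have hstep (i : ℤ) : 2 * T R (2 * i + c) = U R (2 * i + c) - U R (2 * (i - 1) + c) := by
    linear_combination (norm := ring_nf) two_mul_T_eq_U_sub_U R (2 * i + c - 2)
  simpa [mul_sum, hstep] using sum_Icc_int_sub (fun i ↦ U R (2 * i + c)) (a := 1) (b := n) (by lia)

theorem four_mul_X_mul_sum_Icc_T (n : ℕ) (c : ℤ) :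
    4 * X * ∑ i ∈ Icc (1 : ℤ) n, T R (4 * i + c) = U R (4 * n + c + 1) - U R (c + 1) := by
  have hstep (i : ℤ) :
      4 * X * T R (4 * i + c) = U R (4 * i + c + 1) - U R (4 * (i - 1) + c + 1) := by
    linear_combination (norm := ring_nf) four_mul_X_mul_T_eq_U_sub_U R (4 * i + c)
  simpa [mul_sum, hstep] using
    sum_Icc_int_sub (fun i ↦ U R (4 * i + c + 1)) (a := 1) (b := n) (by lia)

theorem four_mul_X_mul_sum_Icc_T_centered (k : ℕ) :
    4 * X * ∑ i ∈ Icc (1 : ℤ) k, T R (4 * i + (2 - 2 * k)) = 2 * T R 4 * U R (2 * k - 1) := by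
  have hneg : U R (2 - 2 * k + 1) = -U R (2 * k - 1 - 4) := by
    convert U_neg R (2 * k - 3) using 2 <;> ring_nf
  calc
    _ = U R (4 * k + (2 - 2 * k) + 1) - U R (2 - 2 * k + 1) := four_mul_X_mul_sum_Icc_T R k _
    _ = U R (2 * k - 1 + 4) + U R (2 * k - 1 - 4) := by
      rw [hneg, sub_neg_eq_add]
      ring_nf
    _ = _ := U_add_add_U_sub R 4 (2 * k - 1)

theorem U_sq_mul_U_mul_U_eq_T (k i : ℤ) :
    8 * (X ^ 2 - 1) ^ 2 * (U R i ^ 2 * U R (k - i - 2) * U R (k - i)) =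
      2 * T R 2 + T R (2 * k + 2) - 2 * T R (2 * i - 2 * k) - 2 * T R 2 * T R (2 * i + 2)
        + T R (4 * i + (2 - 2 * k)) := by
  have hsq : 2 * (1 - X ^ 2) * U R i ^ 2 = 1 - T R (2 * i + 2) := by
    linear_combination (norm := (simp only [sub_self, T_zero]; ring_nf))
      two_mul_one_sub_X_sq_mul_U_mul_U R i i
  have hshift : 2 * (1 - X ^ 2) * (U R (k - i) * U R (k - i - 2)) =
      T R 2 - T R (2 * i - 2 * k) := by
    rw [← T_neg R (2 * i - 2 * k)]
    linear_combination (norm := ring_nf) two_mul_one_sub_X_sq_mul_U_mul_U R (k - i) (k - i - 2)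
  have hTT := T_mul_T R (2 * i + 2) (2 * i - 2 * k)
  calc
    _ = 2 * (2 * (1 - X ^ 2) * U R i ^ 2)
          * (2 * (1 - X ^ 2) * (U R (k - i) * U R (k - i - 2))) := by ring
    _ = 2 * (1 - T R (2 * i + 2)) * (T R 2 - T R (2 * i - 2 * k)) := by rw [hsq, hshift]
    _ = _ := by linear_combination (norm := ring_nf) hTT

theorem sum_Icc_U_sq_mul_U_mul_U_eq_sum_T (k : ℕ) :
    8 * (X ^ 2 - 1) ^ 2 * ∑ i ∈ Icc (1 : ℤ) k, U R i ^ 2 * U R (k - i - 2) * U R (k - i) =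
      (k : R[X]) * (2 * T R 2 + T R (2 * k + 2)) - (U R (2 * k - 2) + 1)
        - T R 2 * (U R (2 * k + 2) - U R 2) + ∑ i ∈ Icc (1 : ℤ) k, T R (4 * i + (2 - 2 * k)) := by
  have hdown : 2 * ∑ i ∈ Icc (1 : ℤ) k, T R (2 * i - 2 * k) = U R (2 * k - 2) + 1 := by
    simpa [← sub_eq_add_neg, U_neg, add_comm] using two_mul_sum_Icc_T R k (-(2 * k))
  have hup := two_mul_sum_Icc_T R k 2
  simp only [mul_sum, U_sq_mul_U_mul_U_eq_T, sum_add_distrib, sum_sub_distrib]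
  simp only [← mul_sum, sum_const, Int.card_Icc, nsmul_eq_mul, add_sub_cancel_right,
    Int.toNat_natCast]
  linear_combination -hdown - T R 2 * hup

theorem sum_Icc_U_sq_mul_U_mul_U (k : ℕ) :
    32 * X * (X ^ 2 - 1) ^ 2 *
        ∑ i ∈ Icc (1 : ℤ) k, U R i ^ 2 * U R (k - i - 2) * U R (k - i) =
      2 * ((16 * X ^ 4 - 2 * ((k : R[X]) + 8) * X ^ 2 + 1) * U R (2 * k - 1)
        + X * (2 * (-8 * X ^ 4 + 2 * ((k : R[X]) + 3) * X ^ 2 - (k : R[X])) * U R (2 * k)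
          + 2 * (2 * (k : R[X]) + 1) * T R 2 + 2 * T R 4)) := by
  have hsum := sum_Icc_U_sq_mul_U_mul_U_eq_sum_T R k
  have hT := four_mul_X_mul_sum_Icc_T_centered R k
  rw [T_eq_X_mul_U_sub_U, U_add_two, U_add_one, U_sub_two, U_two, T_two] at hsum
  rw [T_four] at hT
  rw [T_two, T_four]
  linear_combination 4 * X * hsum + hT

end Chebyshev

section Field

open Polynomial.Chebyshev

theorem sum_q21_general {K : Type*} [Field K] (h2 : (2 : K) ≠ 0) (k : ℕ) (x : K) (hx0 : x ≠ 0)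
    (hx : x ^ 2 ≠ 1) :
    ∑ i ∈ Finset.Icc (1 : ℤ) k,
        (U K i).eval x ^ 2 * (U K (k - i - 2)).eval x * (U K (k - i)).eval x =
      (16 * x ^ 4 - 2 * (k + 8) * x ^ 2 + 1) * (U K (2 * k - 1)).eval x /
          (16 * x * (x ^ 2 - 1) ^ 2) +
        x * (2 * (-8 * x ^ 4 + 2 * (k + 3) * x ^ 2 - k) * (U K (2 * k)).eval x +
              2 * (2 * k + 1) * (T K 2).eval x + 2 * (T K 4).eval x) /
          (16 * x * (x ^ 2 - 1) ^ 2) := by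
  have hden : 16 * x * (x ^ 2 - 1) ^ 2 ≠ 0 := by
    have h16 : (16 : K) ≠ 0 := by
      rw [show (16 : K) = 2 ^ 4 by norm_num]
      exact pow_ne_zero 4 h2
    exact mul_ne_zero (mul_ne_zero h16 hx0) (pow_ne_zero 2 (sub_ne_zero.mpr hx))
  have heval := congrArg (Polynomial.eval x) (sum_Icc_U_sq_mul_U_mul_U K k)
  simp only [Polynomial.eval_mul, Polynomial.eval_ofNat, Polynomial.eval_X, Polynomial.eval_pow,
    Polynomial.eval_sub, Polynomial.eval_one, Polynomial.eval_finsetSum, Polynomial.eval_add,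
    Polynomial.eval_natCast, Polynomial.eval_neg] at heval
  rw [← add_div, eq_div_iff hden]
  apply mul_left_cancel₀ h2
  linear_combination heval

end Field

/-- `Σ_{i=1}^{k} U_i(x)²·U_{k-i-2}(x)·U_{k-i}(x)` in closed form (identity `q₂₁`). -/
theorem sum_q21 (k : ℕ) (hk : 1 ≤ k) (x : ℝ) (hx0 : x ≠ 0) (hx : x ^ 2 ≠ 1) :
    ∑ i ∈ Finset.Icc (1 : ℤ) (k : ℤ),
        chebU i x ^ 2 * chebU ((k : ℤ) - i - 2) x * chebU ((k : ℤ) - i) x =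
      (16 * x ^ 4 - 2 * (k + 8) * x ^ 2 + 1) * chebU (2 * (k : ℤ) - 1) x /
          (16 * x * (x ^ 2 - 1) ^ 2) +
        x * (2 * (-8 * x ^ 4 + 2 * (k + 3) * x ^ 2 - k) * chebU (2 * (k : ℤ)) x +
              2 * (2 * k + 1) * chebT 2 x + 2 * chebT 4 x) /
          (16 * x * (x ^ 2 - 1) ^ 2) := by
  exact sum_q21_general two_ne_zero k x hx0 hx
end
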